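/- Let (R, 𝔪, k) be a commutative noetherian Cohen–Macaulay local ring of Krull dimension d. If for every finitely generated R-module M the R-module Ext_R^1(M, R) has finite projective dimension, then Ext_R^{d+1}(k, R) = 0, i.e., R is Gorenstein. -/

import Mathlib

open CategoryTheory

universe u

/-- `ProjDimLE R n M` : `M` admits a resolution of length `n` by finitely generated free
`R`-modules ending in a finitely generated projective module. -/
def ProjDimLE (R : Type u) [CommRing R] : ℕ → ∀ (M : Type u) [AddCommGroup M] [Module R M], Prop
  | 0, M, _, _ => Module.Projective R M ∧ Module.Finite R M
  | n + 1, M, _, _ => ∃ (k : ℕ) (f : (Fin k → R) →ₗ[R] M),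
      Function.Surjective f ∧ ProjDimLE R n (LinearMap.ker f)

/-- `M` admits a finite resolution by finitely generated projective `R`-modules. -/
def HasFiniteProjDim (R : Type u) [CommRing R] (M : Type u) [AddCommGroup M] [Module R M] :
    Prop :=
  ∃ n, ProjDimLE R n M

/-- The Ext module `Ext_R^n(M, N)` of `R`-modules. -/
noncomputable def ExtMod (R : Type u) [CommRing R] (n : ℕ) (M N : Type u)
    [AddCommGroup M] [Module R M] [AddCommGroup N] [Module R N] : ModuleCat R :=
  ((Ext R (ModuleCat R) n).obj (Opposite.op (ModuleCat.of R M))).obj (ModuleCat.of R N)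

/-!
Let `L` be a `d`-th syzygy of `k`. For every module `N`, `Ext¹(L, N) ≅ Extᵈ⁺¹(k, N)` is killed by
`𝔪`. If it is nonzero, then `k` is a direct summand of it, and hence `k` has finite projective
dimension. Cutting `R` by a maximal regular sequence gives an `E` with `pd E ≤ d` and an embedding
`k ↪ E`. If `pd k` exceeded `d`, it would follow that `pd (E / k) = pd k + 1`, whereas every
finitely generated module has projective dimension at most `pd k`. Hence `pd k ≤ d`, and
`Extᵈ⁺¹(k, N) = 0` after all.
-/

open Abelian IsLocalRing

section ExtComparison

variable {A : Type*} [Ring A] {C : Type*} [Category* C] [Abelian C] [Linear A C] [HasExt C]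
  {X Y : C}

/-- The `A`-linear map sending a cocycle `f : Pₙ ⟶ Y` of a projective resolution `P` of `X` to the
class it represents in `Ext X Y n`; it is used to compare the derived-functor and derived-category
definitions of `Ext`. -/
noncomputable def cocycleToExt (P : ProjectiveResolution X) (n : ℕ) :
    LinearMap.ker (Linear.leftComp A Y (P.complex.d (n + 1) n)) →ₗ[A] Abelian.Ext X Y n where
  toFun f := P.extMk f.1 (n + 1) rfl f.2
  map_add' f g := (P.add_extMk f.1 g.1 (n + 1) rfl f.2 g.2).symm
  map_smul' a f := by
    rw [RingHom.id_apply, Abelian.Ext.smul_eq_comp_mk₀, P.extMk_comp_mk₀ _ _ rfl f.2]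
    congr 1
    simp

lemma cocycleToExt_surjective (P : ProjectiveResolution X) (n : ℕ) :
    Function.Surjective (cocycleToExt (A := A) (Y := Y) P n) := fun x ↦ by
  obtain ⟨f, hf, rfl⟩ := P.extMk_surjective x (n + 1) rfl
  exact ⟨⟨f, hf⟩, rfl⟩

lemma mem_ker_cocycleToExt_iff (P : ProjectiveResolution X) (n : ℕ)
    (f : LinearMap.ker (Linear.leftComp A Y (P.complex.d (n + 2) (n + 1)))) :
    f ∈ LinearMap.ker (cocycleToExt P (n + 1)) ↔
      ∃ g : P.complex.X n ⟶ Y, P.complex.d (n + 1) n ≫ g = f.1 :=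
  P.extMk_eq_zero_iff f.1 (n + 2) rfl f.2 n rfl

variable (A) in
lemma nonempty_ext_linearEquiv_abelianExt [EnoughProjectives C] (X Y : C) (n : ℕ) :
    Nonempty (((Ext A C (n + 1)).obj (Opposite.op X)).obj Y ≃ₗ[A] Abelian.Ext X Y (n + 1)) := by
  let P := projectiveResolution X
  let K := P.complex.linearYonedaObj A Y
  let S := K.sc' n (n + 1) (n + 2)
  let homologyIso :=
    P.isoExt (n + 1) Y ≪≫ K.homologyIsoSc' n (n + 1) (n + 2) (by simp) (by simp) ≪≫
      S.moduleCatHomologyIso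
  let φ : LinearMap.ker S.g.hom →ₗ[A] Abelian.Ext X Y (n + 1) := cocycleToExt P (n + 1)
  have range_eq_ker : LinearMap.range S.moduleCatToCycles = LinearMap.ker φ := by
    ext f
    exact Iff.trans ⟨fun ⟨g, hg⟩ ↦ ⟨g, congrArg Subtype.val hg⟩, fun ⟨g, hg⟩ ↦ ⟨g, Subtype.ext hg⟩⟩
      (mem_ker_cocycleToExt_iff P n f).symm
  exact ⟨homologyIso.toLinearEquiv ≪≫ₗ Submodule.quotEquivOfEq _ _ range_eq_ker ≪≫ₗ
    φ.quotKerEquivOfSurjective (cocycleToExt_surjective P (n + 1))⟩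

end ExtComparison

section ExactSequences

variable {C : Type*} [Category* C] [Abelian C] [HasExt C] {S : ShortComplex C}

lemma precomp_extClass_bijective_of_projective_X₂ (hS : S.ShortExact) [Projective S.X₂] (Y : C)
    (n : ℕ) : Function.Bijective (hS.extClass.precomp Y (add_comm 1 (n + 1))) := by
  refine ⟨(injective_iff_map_eq_zero _).2 fun x hx ↦ ?_, fun x ↦
    Abelian.Ext.contravariant_sequence_exact₃ hS Y x (Abelian.Ext.eq_zero_of_projective _)
      (add_comm 1 (n + 1))⟩
  obtain ⟨y, rfl⟩ := Abelian.Ext.contravariant_sequence_exact₁ hS Y x (add_comm 1 (n + 1)) hx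
  rw [Abelian.Ext.eq_zero_of_projective y, Abelian.Ext.comp_zero]

end ExactSequences

variable {R : Type u} [CommRing R]

lemma exists_finite_syzygy_ext_one_linearEquiv [IsNoetherianRing R] (M N : ModuleCat.{u} R)
    [Module.Finite R M] (n : ℕ) :
    ∃ L : ModuleCat.{u} R, Module.Finite R L ∧
      Nonempty (Abelian.Ext L N 1 ≃ₗ[R] Abelian.Ext M N (n + 1)) := by
  induction n generalizing M with
  | zero => exact ⟨M, inferInstance, ⟨LinearEquiv.refl R _⟩⟩
  | succ n ih =>
    obtain ⟨F, _, _, _, _, f, hf⟩ := Module.exists_finite_presentation R M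
    have hS := LinearMap.shortExact_shortComplexKer hf
    obtain ⟨L, hL, ⟨e⟩⟩ := ih f.shortComplexKer.X₁
    exact ⟨L, hL, ⟨e ≪≫ₗ LinearEquiv.ofBijective
      (hS.extClass.precompOfLinear R N (add_comm 1 (n + 1)))
      (precomp_extClass_bijective_of_projective_X₂ hS N n)⟩⟩

lemma annihilator_le_annihilator_ext (M N : ModuleCat.{u} R) (n : ℕ) :
    Module.annihilator R M ≤ Module.annihilator R (Abelian.Ext M N n) := by
  intro r hr
  refine Module.mem_annihilator.2 fun x ↦ ?_
  have hr_id : r • 𝟙 M = 0 := by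
    ext m
    exact Module.mem_annihilator.1 hr m
  rw [← Abelian.Ext.mk₀_id_comp x, ← Abelian.Ext.smul_comp, ← Abelian.Ext.mk₀_smul, hr_id,
    Abelian.Ext.mk₀_zero, Abelian.Ext.zero_comp]

/-- The short complex `R ⧸ (I : a) → R ⧸ I → R ⧸ (I + (a))` given by multiplication by `a` and by
the projection. -/
noncomputable abbrev colonShortComplex (I : Ideal R) (a : R) : ShortComplex (ModuleCat.{u} R) :=
  ModuleCat.shortComplexOfCompEqZero
    (Submodule.mapQ (I.colon (Ideal.span {a})) I (LinearMap.mulLeft R a) fun r hr ↦ by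
      simpa [mul_comm] using Ideal.mem_colon_span_singleton.1 hr)
    (Submodule.factor (le_sup_left : I ≤ I ⊔ Ideal.span {a})) (by
      refine LinearMap.ext fun y ↦ ?_
      obtain ⟨r, rfl⟩ := Submodule.Quotient.mk_surjective _ y
      exact (Submodule.Quotient.mk_eq_zero _).2
        (Ideal.mem_sup_right (Ideal.mem_span_singleton.2 ⟨r, rfl⟩)))

lemma colonShortComplex_shortExact (I : Ideal R) (a : R) :
    (colonShortComplex I a).ShortExact := by
  refine ModuleCat.shortComplex_shortExact _ ?_ ?_ (Submodule.factor_surjective le_sup_left)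
  · refine fun y ↦ ⟨fun hy ↦ ?_, fun ⟨z, hz⟩ ↦ hz ▸ ShortComplex.moduleCat_zero_apply _ z⟩
    obtain ⟨r, rfl⟩ := Submodule.Quotient.mk_surjective _ y
    obtain ⟨s, hs, t, ht, rfl⟩ := Submodule.mem_sup.1 ((Submodule.Quotient.mk_eq_zero _).1 hy)
    obtain ⟨b, rfl⟩ := Ideal.mem_span_singleton.1 ht
    exact ⟨Submodule.Quotient.mk b, (Submodule.Quotient.eq _).2 (by simpa using hs)⟩
  · refine (injective_iff_map_eq_zero _).2 fun y hy ↦ ?_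
    obtain ⟨r, rfl⟩ := Submodule.Quotient.mk_surjective _ y
    exact (Submodule.Quotient.mk_eq_zero _).2
      (Ideal.mem_colon_span_singleton.2 (mul_comm a r ▸ (Submodule.Quotient.mk_eq_zero _).1 hy))

lemma isOka_hasProjectiveDimensionLT_quotient (n : ℕ) :
    Ideal.IsOka fun I : Ideal R ↦ HasProjectiveDimensionLT (ModuleCat.of R (R ⧸ I)) n where
  top :=
    have := ((ModuleCat.isZero_iff_subsingleton (M := ModuleCat.of R (R ⧸ (⊤ : Ideal R)))).2
      (Ideal.Quotient.subsingleton_iff.2 rfl)).hasProjectiveDimensionLT_zero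
    hasProjectiveDimensionLT_of_ge _ 0 n n.zero_le
  oka {I a} hsup hcolon :=
    (colonShortComplex_shortExact I a).hasProjectiveDimensionLT_X₂ n hcolon hsup

/-- Reducing `R ⧸ I` modulo `x` gives `R ⧸ (I + (x))`. -/
noncomputable def quotSMulTopQuotientEquiv (I : Ideal R) (x : R) :
    QuotSMulTop x (R ⧸ I) ≃ₗ[R] R ⧸ (I ⊔ Ideal.span {x}) :=
  Submodule.quotEquivOfEq _ _ (by
    rw [← Submodule.ideal_span_singleton_smul, ← Submodule.range_mkQ I, ← Submodule.map_top,
      ← Submodule.map_smul'', smul_eq_mul, Ideal.mul_top]) ≪≫ₗ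
    Submodule.quotientQuotientEquivQuotientSup I (Ideal.span {x})

section ResidueField

variable [IsLocalRing R]

variable (R) in
lemma annihilator_residueField : Module.annihilator R (ResidueField R) = maximalIdeal R :=
  Ideal.annihilator_quotient

lemma nonempty_retract_residueField (E : ModuleCat.{u} R) [Nontrivial E]
    (hE : maximalIdeal R ≤ Module.annihilator R E) :
    Nonempty (Retract (ModuleCat.of R (ResidueField R)) E) := by
  have torsion : Module.IsTorsionBySet R E (maximalIdeal R : Set R) :=
    fun x r ↦ Module.mem_annihilator.1 (hE r.2) x
  let _ : Module (ResidueField R) E := torsion.module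
  have : IsScalarTower R (ResidueField R) E := torsion.isScalarTower
  obtain ⟨e, he⟩ := exists_ne (0 : E)
  let f := LinearMap.toSpanSingleton (ResidueField R) E e
  obtain ⟨g, hg⟩ := f.exists_leftInverse_of_injective (LinearMap.ker_toSpanSingleton _ he)
  exact ⟨⟨ModuleCat.ofHom (f.restrictScalars R), ModuleCat.ofHom (g.restrictScalars R), by
    rw [← ModuleCat.ofHom_comp, ← LinearMap.restrictScalars_comp, hg]; rfl⟩⟩

variable [IsNoetherianRing R]

lemma hasProjectiveDimensionLT_quotSMulTop_succ_iff (M : ModuleCat.{u} R) [Module.Finite R M]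
    {x : R} (hreg : IsSMulRegular M x) (hx : x ∈ maximalIdeal R) (n : ℕ) :
    HasProjectiveDimensionLT (ModuleCat.of R (QuotSMulTop x M)) (n + 1) ↔
      HasProjectiveDimensionLT M n := by
  rw [← projectiveDimension_lt_iff, ← projectiveDimension_lt_iff,
    ModuleCat.projectiveDimension_quotSMulTop_eq_succ_of_isSMulRegular M x hreg hx,
    Nat.cast_add, Nat.cast_one]
  exact lt_iff_lt_of_le_iff_le ENat.WithBot.add_le_add_one_right_iff

lemma hasProjectiveDimensionLT_quotient_of_residueField (n : ℕ)
    [HasProjectiveDimensionLT (ModuleCat.of R (ResidueField R)) n] (I : Ideal R) :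
    HasProjectiveDimensionLT (ModuleCat.of R (R ⧸ I)) n := by
  by_contra hI
  obtain ⟨P, hP⟩ := exists_maximal_of_wellFoundedGT
    (fun I : Ideal R ↦ ¬ HasProjectiveDimensionLT (ModuleCat.of R (R ⧸ I)) n) ⟨I, hI⟩
  have P_prime := (isOka_hasProjectiveDimensionLT_quotient n).isPrime_of_maximal_not hP
  obtain ⟨x, hx, hxP⟩ : ∃ x ∈ maximalIdeal R, x ∉ P := by
    refine SetLike.exists_of_lt ((le_maximalIdeal P_prime.ne_top).lt_of_ne ?_)
    rintro rfl
    exact hP.prop ‹_›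
  have hreg : IsSMulRegular (R ⧸ P) x := by
    refine isSMulRegular_iff_right_eq_zero_of_smul.2 fun y hy ↦ ?_
    obtain ⟨r, rfl⟩ := Ideal.Quotient.mk_surjective y
    exact Ideal.Quotient.eq_zero_iff_mem.2
      ((P_prime.mem_or_mem (Ideal.Quotient.eq_zero_iff_mem.1 hy)).resolve_left hxP)
  have hsup : HasProjectiveDimensionLT (ModuleCat.of R (R ⧸ (P ⊔ Ideal.span {x}))) n :=
    not_not.1 (hP.not_prop_of_gt (Submodule.lt_sup_iff_notMem.2 hxP))
  have := hasProjectiveDimensionLT_of_iso (quotSMulTopQuotientEquiv P x).toModuleIso.symm n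
  exact hP.prop ((hasProjectiveDimensionLT_quotSMulTop_succ_iff (ModuleCat.of R (R ⧸ P)) hreg hx
    n).1 (hasProjectiveDimensionLT_of_ge _ n (n + 1) n.le_succ))

theorem hasProjectiveDimensionLT_of_residueField (M : ModuleCat.{u} R) [Module.Finite R M]
    (n : ℕ) [HasProjectiveDimensionLT (ModuleCat.of R (ResidueField R)) n] :
    HasProjectiveDimensionLT M n := by
  suffices ∀ (M : Type u) [AddCommGroup M] [Module R M] [Module.Finite R M],
      HasProjectiveDimensionLT (ModuleCat.of R M) n from this M
  intro M _ _ hM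
  induction hM using IsNoetherianRing.induction_on_isQuotientEquivQuotientPrime R with
  | subsingleton N =>
    have := (ModuleCat.isZero_of_subsingleton (ModuleCat.of R N)).hasProjectiveDimensionLT_zero
    exact hasProjectiveDimensionLT_of_ge _ 0 n n.zero_le
  | quotient N p e =>
    have := hasProjectiveDimensionLT_quotient_of_residueField n p.asIdeal
    exact hasProjectiveDimensionLT_of_iso e.toModuleIso.symm n
  | exact N₁ N₂ N₃ f g hf hg hfg h₁ h₃ =>
    exact (ModuleCat.shortComplex_shortExact (ModuleCat.shortComplexOfCompEqZero f g
      hfg.linearMap_comp_eq_zero) hfg hf hg).hasProjectiveDimensionLT_X₂ n h₁ h₃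

lemma exists_injective_residueField_or_exists_isSMulRegular (M : Type u) [AddCommGroup M]
    [Module R M] [Module.Finite R M] :
    (∃ f : ResidueField R →ₗ[R] M, Function.Injective f) ∨
      ∃ x ∈ maximalIdeal R, IsSMulRegular M x := by
  rcases subsingleton_or_nontrivial (ResidueField R →ₗ[R] M) with hsub | _
  · rw [IsSMulRegular.subsingleton_linearMap_iff, annihilator_residueField] at hsub
    exact .inr hsub
  · obtain ⟨f, hf⟩ := exists_ne (0 : ResidueField R →ₗ[R] M)
    have : IsSimpleModule R (ResidueField R) :=
      isSimpleModule_iff_isCoatom.2 (maximalIdeal.isMaximal R).out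
    exact .inl ⟨f, f.injective_or_eq_zero.resolve_right hf⟩

lemma exists_finite_injective_residueField (M : ModuleCat.{u} R) [Module.Finite R M]
    [Nontrivial M] (m n : ℕ) (hpd : HasProjectiveDimensionLT M (m + 1))
    (hdim : Module.supportDim R M < n) :
    ∃ (E : ModuleCat.{u} R) (f : ResidueField R →ₗ[R] E), Module.Finite R E ∧
      HasProjectiveDimensionLT E (m + n) ∧ Function.Injective f := by
  induction n generalizing M m with
  | zero =>
    have supportDim_eq_bot := (ENat.WithBot.add_one_le_zero_iff _).1
      (ENat.WithBot.add_one_le_natCast_iff.2 hdim)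
    exact absurd supportDim_eq_bot (Module.supportDim_ne_bot_of_nontrivial R M)
  | succ n ih =>
    rcases exists_injective_residueField_or_exists_isSMulRegular (R := R) M with
      ⟨f, hf⟩ | ⟨x, hx, hreg⟩
    · exact ⟨M, f, inferInstance, hasProjectiveDimensionLT_of_ge M (m + 1) _ (by omega), hf⟩
    · have := nontrivial_quotSMulTop_of_mem_maximalIdeal M hx
      have hdim' : Module.supportDim R (QuotSMulTop x M) < n := by
        rw [← Module.supportDim_quotSMulTop_succ_eq_supportDim hreg hx, Nat.cast_succ] at hdim
        exact (lt_iff_lt_of_le_iff_le ENat.WithBot.add_le_add_one_right_iff).1 hdim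
      have := ih (ModuleCat.of R (QuotSMulTop x M)) (m + 1)
        ((hasProjectiveDimensionLT_quotSMulTop_succ_iff M hreg hx (m + 1)).2 hpd) hdim'
      rwa [add_right_comm] at this

theorem hasProjectiveDimensionLT_residueField {d : ℕ} (hdim : ringKrullDim R ≤ d) (n : ℕ)
    (hn : HasProjectiveDimensionLT (ModuleCat.of R (ResidueField R)) n) :
    HasProjectiveDimensionLT (ModuleCat.of R (ResidueField R)) (d + 1) := by
  obtain ⟨E, f, _, hE, hf⟩ := exists_finite_injective_residueField (ModuleCat.of R R) 0 (d + 1)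
    inferInstance
    (by rwa [Nat.cast_succ, ENat.WithBot.lt_add_one_iff, Module.supportDim_self_eq_ringKrullDim])
  have hS := ModuleCat.shortComplex_shortExact (ModuleCat.shortComplexOfCompEqZero f
    (LinearMap.range f).mkQ (LinearMap.range_mkQ_comp f)) (LinearMap.exact_map_mkQ_range f) hf
    (Submodule.mkQ_surjective _)
  induction n with
  | zero => exact hasProjectiveDimensionLT_of_ge _ 0 _ (Nat.zero_le _)
  | succ n ih =>
    by_cases hnd : n ≤ d
    · exact hasProjectiveDimensionLT_of_ge _ (n + 1) _ (by omega)
    exact ih (hS.hasProjectiveDimensionLT_X₁ n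
      (hasProjectiveDimensionLT_of_ge E (0 + (d + 1)) n (by omega))
      (hasProjectiveDimensionLT_of_residueField _ (n + 1)))

end ResidueField

lemma ProjDimLE.hasProjectiveDimensionLT {n : ℕ} {M : Type u} [AddCommGroup M] [Module R M]
    (h : ProjDimLE R n M) : HasProjectiveDimensionLT (ModuleCat.of R M) (n + 1) := by
  induction n generalizing M with
  | zero =>
    have := h.1
    infer_instance
  | succ n ih =>
    obtain ⟨k, f, hf, hker⟩ := h
    exact (LinearMap.shortExact_shortComplexKer hf).hasProjectiveDimensionLT_X₃ (n + 1) (ih hker)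
      (hasProjectiveDimensionLT_of_ge _ 1 _ (by omega))

theorem gorenstein_of_ext_one_finiteProjDim_general (R : Type u) [CommRing R] [IsNoetherianRing R]
    [IsLocalRing R] {d : ℕ} (hdim : ringKrullDim R ≤ d) (N : Type u) [AddCommGroup N] [Module R N]
    (h : ∀ (M : Type u) [AddCommGroup M] [Module R M] [Module.Finite R M],
      HasFiniteProjDim R (ExtMod R 1 M N)) :
    Subsingleton (ExtMod R (d + 1) (ResidueField R) N) := by
  let k := ModuleCat.of R (ResidueField R)
  obtain ⟨eExt⟩ := nonempty_ext_linearEquiv_abelianExt R k (ModuleCat.of R N) d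
  obtain ⟨L, _, ⟨eShift⟩⟩ := exists_finite_syzygy_ext_one_linearEquiv k (ModuleCat.of R N) d
  obtain ⟨eExtOne⟩ := nonempty_ext_linearEquiv_abelianExt R L (ModuleCat.of R N) 0
  let E : ModuleCat R := ExtMod R 1 L N
  have eE : E ≃ₗ[R] Abelian.Ext k (ModuleCat.of R N) (d + 1) := eExtOne ≪≫ₗ eShift
  refine eExt.toEquiv.subsingleton_congr.2 ?_
  by_contra hne
  have := not_subsingleton_iff_nontrivial.1 hne
  have : Nontrivial E := eE.toEquiv.nontrivial
  have hE : maximalIdeal R ≤ Module.annihilator R E := by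
    rw [eE.annihilator_eq, ← annihilator_residueField]
    exact annihilator_le_annihilator_ext k (ModuleCat.of R N) (d + 1)
  obtain ⟨k_retract⟩ := nonempty_retract_residueField E hE
  obtain ⟨n, hn⟩ := h L
  have : HasProjectiveDimensionLT E (n + 1) := hn.hasProjectiveDimensionLT
  have := hasProjectiveDimensionLT_residueField hdim (n + 1)
    (k_retract.hasProjectiveDimensionLT (n + 1))
  exact hne (HasProjectiveDimensionLT.subsingleton k (d + 1) (d + 1) le_rfl _)

/-- Let `(R, 𝔪, k)` be a commutative noetherian Cohen–Macaulay local ring of Krull dimension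
`d` (Cohen–Macaulayness is expressed by the vanishing `Ext_R^i(k, R) = 0` for all `i < d`).
If for every finitely generated `R`-module `M` the `R`-module `Ext_R^1(M, R)` has finite
projective dimension, then `Ext_R^{d+1}(k, R) = 0`, i.e. `R` is Gorenstein. -/
theorem gorenstein_of_ext_one_finiteProjDim (R : Type u) [CommRing R] [IsNoetherianRing R]
    [IsLocalRing R] (d : ℕ) (hdim : ringKrullDim R = d)
    (hCM : ∀ i < d, Subsingleton (ExtMod R i (IsLocalRing.ResidueField R) R))
    (h : ∀ (M : Type u) [AddCommGroup M] [Module R M] [Module.Finite R M],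
      HasFiniteProjDim R (ExtMod R 1 M R)) :
    Subsingleton (ExtMod R (d + 1) (IsLocalRing.ResidueField R) R) :=
  gorenstein_of_ext_one_finiteProjDim_general R hdim.le R h
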